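/- Let f ∈ Hol(α) be a bounded α-Hölder potential with conformal measure ν, eigenvalue λ and eigenfunction h, and define the operators Q(φ) = L_f(hφ)/(λh) and Π(φ) = ∫_X φ·h dν (a constant function). Then Q and Π map Hol(α) boundedly into itself, Π∘Q = Q∘Π = Π, Q and Π act as the identity on constant functions, and there exists C > 0 and s ∈ (0,1) (with s as in the exponential decay theorem) such that ‖(Q − Π)^n(φ)‖_α ≤ C·s^n·‖φ‖_α for every φ ∈ Hol(α) and every n ∈ ℕ. -/

import Mathlib

open MeasureTheory Filter Topology BoundedContinuousFunction

noncomputable section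

variable {E : Type*} [MetricSpace E]

/-- The metric on the sequence space `X = E^ℕ`:
`d_X(x,y) = ∑_{n=1}^∞ 2⁻ⁿ · min(d_E(x_n,y_n), 1)`. -/
def dX (x y : ℕ → E) : ℝ :=
  ∑' n : ℕ, ((1 : ℝ) / 2) ^ (n + 1) * min (dist (x n) (y n)) 1

/-- The left shift `σ(x₁,x₂,x₃,…) = (x₂,x₃,…)`. -/
def shift (x : ℕ → E) : ℕ → E := fun n => x (n + 1)

theorem continuous_shift : Continuous (shift (E := E)) :=
  continuous_pi fun n => continuous_apply (n + 1)

/-- Prepending one symbol: `ax = (a, x₁, x₂, …)`. -/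
def cons (a : E) (x : ℕ → E) : ℕ → E := fun n => Nat.casesOn n a x

/-- Prepending a finite word `a = (a₁,…,a_n)`. -/
def prepend {n : ℕ} (a : Fin n → E) (x : ℕ → E) : ℕ → E :=
  fun k => if h : k < n then a ⟨k, h⟩ else x (k - n)

/-- Birkhoff sums `f_n = ∑_{k=0}^{n-1} f ∘ σᵏ`. -/
def birkhoff (f : (ℕ → E) → ℝ) (n : ℕ) (x : ℕ → E) : ℝ :=
  ∑ k ∈ Finset.range n, f (shift^[k] x)

/-- Boundedness of a real-valued function on `X`. -/
def Bdd (g : (ℕ → E) → ℝ) : Prop := ∃ M : ℝ, ∀ x, |g x| ≤ M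

/-- `g` is `α`-Hölder with constant `C` (w.r.t. the metric `dX`). -/
def HolderConst (α C : ℝ) (g : (ℕ → E) → ℝ) : Prop :=
  ∀ x y, |g x - g y| ≤ C * dX x y ^ α

/-- `g ∈ Hol(α)`: bounded, continuous and `α`-Hölder. -/
def MemHol (α : ℝ) (g : (ℕ → E) → ℝ) : Prop :=
  Continuous g ∧ Bdd g ∧ ∃ C : ℝ, HolderConst α C g

/-- `g ∈ C_b(X,ℝ)`: bounded and continuous. -/
def MemCb (g : (ℕ → E) → ℝ) : Prop := Continuous g ∧ Bdd g

/-- The Hölder seminorm `D_α(g) = sup_{x ≠ y} |g x - g y| / d_X(x,y)^α`. -/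
def Dalpha (α : ℝ) (g : (ℕ → E) → ℝ) : ℝ :=
  sSup {r : ℝ | ∃ x y : ℕ → E, x ≠ y ∧ r = |g x - g y| / dX x y ^ α}

/-- The supremum norm `‖g‖_∞`. -/
def supNorm (g : (ℕ → E) → ℝ) : ℝ := ⨆ x : ℕ → E, |g x|

/-- The Hölder norm `‖g‖_α = ‖g‖_∞ + D_α(g)`. -/
def alphaNorm (α : ℝ) (g : (ℕ → E) → ℝ) : ℝ := supNorm g + Dalpha α g

variable [MeasurableSpace E] [BorelSpace E]

/-- The Ruelle transfer operator `L_f φ(x) = ∫_E e^{f(ax)} φ(ax) dp(a)`. -/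
def ruelle (p : Measure E) (f φ : (ℕ → E) → ℝ) : (ℕ → E) → ℝ :=
  fun x => ∫ a, Real.exp (f (cons a x)) * φ (cons a x) ∂p

/-- The normalized operators `P^m_n(φ) = L_f^m(φ · L_f^n 1) / L_f^{m+n} 1`. -/
def Pmn (p : Measure E) (f : (ℕ → E) → ℝ) (m n : ℕ) (φ : (ℕ → E) → ℝ) : (ℕ → E) → ℝ :=
  fun x => (ruelle p f)^[m] (fun y => φ y * (ruelle p f)^[n] (fun _ => 1) y) x /
    (ruelle p f)^[m + n] (fun _ => 1) x

/-- The equivalent bounded metric `d̄(x,y) = min{1, 4 C_f d_X(x,y)^α}`. -/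
def dbar (Cf α : ℝ) (x y : ℕ → E) : ℝ := min 1 (4 * Cf * dX x y ^ α)

/-- The Wasserstein distance associated to `d̄`, via Kantorovich duality. -/
def wass (Cf α : ℝ) (μ₁ μ₂ : Measure (ℕ → E)) : ℝ :=
  sSup {r : ℝ | ∃ g : (ℕ → E) → ℝ,
    (∀ x y, |g x - g y| ≤ dbar Cf α x y) ∧ r = (∫ x, g x ∂μ₁) - ∫ x, g x ∂μ₂}

/-- The normalized transfer operator `Q(φ) = L_f(hφ)/(λh)`. -/
def Qop (p : Measure E) (f h : (ℕ → E) → ℝ) (lam : ℝ) (φ : (ℕ → E) → ℝ) :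
    (ℕ → E) → ℝ :=
  fun x => ruelle p f (fun y => h y * φ y) x / (lam * h x)

/-- The projection `Π(φ) = ∫ φ h dν` (as a constant function). -/
def Piop (ν : Measure (ℕ → E)) (h : (ℕ → E) → ℝ) (φ : (ℕ → E) → ℝ) : (ℕ → E) → ℝ :=
  fun _ => ∫ y, φ y * h y ∂ν

/-- The operator `Q − Π`. -/
def QminusPi (p : Measure E) (f h : (ℕ → E) → ℝ) (lam : ℝ) (ν : Measure (ℕ → E)) :
    ((ℕ → E) → ℝ) → (ℕ → E) → ℝ :=
  fun φ x => Qop p f h lam φ x - Piop ν h φ x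

section Helpers10

set_option linter.unusedSectionVars false

theorem h10_exp_contr (B t : ℝ) (hB : 1 < B) (ht0 : 0 ≤ t) (ht1 : t ≤ 1) :
    1 - Real.exp (-((B - 1) * t)) ≤
      (1 - Real.exp (-(B - 1))) / (1 - Real.exp (-B)) * (1 - Real.exp (-(B * t))) := by
  have hB0 : 0 < B := by linarith
  have he : Real.exp (-B) < 1 := by rw [Real.exp_lt_one_iff]; linarith
  have hd : 0 < 1 - Real.exp (-B) := by linarith
  set w := (1 - Real.exp (-(B * t))) / (1 - Real.exp (-B)) with hw
  have hw0 : 0 ≤ w := by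
    apply div_nonneg _ hd.le
    have : Real.exp (-(B * t)) ≤ 1 := by
      rw [Real.exp_le_one_iff]; nlinarith
    linarith
  have hw1 : w ≤ 1 := by
    rw [hw, div_le_one hd]
    have : Real.exp (-B) ≤ Real.exp (-(B * t)) := by
      apply Real.exp_le_exp.mpr; nlinarith
    linarith
  have hr0 : 0 ≤ (B - 1) / B := div_nonneg (by linarith) hB0.le
  have hr1 : (B - 1) / B ≤ 1 := by rw [div_le_one hB0]; linarith
  have hc := (Real.concaveOn_rpow hr0 hr1).2 (Set.mem_Ici.2 zero_le_one)
    (Set.mem_Ici.2 (Real.exp_nonneg (-B))) (sub_nonneg.2 hw1) hw0 (by ring)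
  have hv : (1 - w) • (1 : ℝ) + w • Real.exp (-B) = Real.exp (-(B * t)) := by
    have : w * (1 - Real.exp (-B)) = 1 - Real.exp (-(B * t)) := by
      rw [hw]; field_simp
    simp only [smul_eq_mul]; linarith
  rw [hv] at hc
  beta_reduce at hc
  rw [← Real.exp_mul, ← Real.exp_mul, Real.one_rpow] at hc
  have e1 : -(B * t) * ((B - 1) / B) = -((B - 1) * t) := by field_simp
  have e2 : -B * ((B - 1) / B) = -(B - 1) := by field_simp
  rw [e1, e2] at hc
  simp only [smul_eq_mul] at hc
  have : (1 - Real.exp (-(B - 1))) / (1 - Real.exp (-B)) * (1 - Real.exp (-(B * t)))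
      = w * (1 - Real.exp (-(B - 1))) := by rw [hw]; ring
  rw [this]; linarith

theorem h10_exp_lower (B t : ℝ) (ht0 : 0 ≤ t) (ht1 : t ≤ 1) :
    t * (1 - Real.exp (-B)) ≤ 1 - Real.exp (-(B * t)) := by
  have hc := convexOn_exp.2 (Set.mem_univ 0) (Set.mem_univ (-B)) (sub_nonneg.2 ht1) ht0 (by ring)
  simp only [smul_eq_mul, mul_zero, zero_add, Real.exp_zero, mul_one] at hc
  have : t * -B = -(B * t) := by ring
  rw [this] at hc
  linarith

variable {E : Type*} [MetricSpace E]

theorem h10_dX_summable (x y : ℕ → E) :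
    Summable (fun n : ℕ => ((1 : ℝ) / 2) ^ (n + 1) * min (dist (x n) (y n)) 1) := by
  have hs : Summable (fun n : ℕ => ((1 : ℝ) / 2) ^ (n + 1)) :=
    (summable_nat_add_iff 1).2 (summable_geometric_of_lt_one (by norm_num) (by norm_num))
  refine Summable.of_nonneg_of_le (fun n => ?_) (fun n => ?_) hs
  · exact mul_nonneg (by positivity) (le_min dist_nonneg zero_le_one)
  · exact mul_le_of_le_one_right (by positivity) (min_le_right _ _)

theorem h10_dX_nonneg (x y : ℕ → E) : 0 ≤ dX x y :=
  tsum_nonneg fun n => mul_nonneg (by positivity) (le_min dist_nonneg zero_le_one)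

theorem h10_dX_le_one (x y : ℕ → E) : dX x y ≤ 1 := by
  have hs : Summable (fun n : ℕ => ((1 : ℝ) / 2) ^ (n + 1)) :=
    (summable_nat_add_iff 1).2 (summable_geometric_of_lt_one (by norm_num) (by norm_num))
  have h1 : dX x y ≤ ∑' n : ℕ, ((1 : ℝ) / 2) ^ (n + 1) :=
    (h10_dX_summable x y).tsum_le_tsum
      (fun n => mul_le_of_le_one_right (by positivity) (min_le_right _ _)) hs
  have h2 : ∑' n : ℕ, ((1 : ℝ) / 2) ^ (n + 1) = 1 := by
    simp only [pow_succ]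
    rw [tsum_mul_right, tsum_geometric_of_lt_one (by norm_num) (by norm_num)]
    norm_num
  linarith

theorem h10_dX_cons (a : E) (x y : ℕ → E) : dX (cons a x) (cons a y) = dX x y / 2 := by
  unfold dX
  rw [(h10_dX_summable (cons a x) (cons a y)).tsum_eq_zero_add]
  have h0 : dist (cons a x 0) (cons a y 0) = 0 := dist_self a
  have h1 : ∀ (z : ℕ → E) (n : ℕ), cons a z (n + 1) = z n := fun _ _ => rfl
  simp only [h0, h1]
  rw [min_eq_left zero_le_one, mul_zero, zero_add, ← tsum_div_const]
  congr 1; ext n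
  ring

theorem h10_cons_rpow (α : ℝ) (a : E) (x y : ℕ → E) :
    dX (cons a x) (cons a y) ^ α = (1 / 2 : ℝ) ^ α * dX x y ^ α := by
  rw [h10_dX_cons, ← Real.mul_rpow (by norm_num) (h10_dX_nonneg x y)]
  congr 1; ring

theorem h10_cont_cons_left (x : ℕ → E) : Continuous (fun a : E => cons a x) := by
  refine continuous_pi fun n => ?_
  cases n with
  | zero => exact continuous_id
  | succ k => exact continuous_const

theorem h10_cont_cons_right (a : E) : Continuous (fun x : ℕ → E => cons a x) := by
  refine continuous_pi fun n => ?_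
  cases n with
  | zero => exact continuous_const
  | succ k => exact continuous_apply k

theorem h10_sup_nonneg (g : (ℕ → E) → ℝ) : 0 ≤ supNorm g :=
  Real.iSup_nonneg fun _ => abs_nonneg _

theorem h10_le_sup {g : (ℕ → E) → ℝ} (hg : Bdd g) (x : ℕ → E) : |g x| ≤ supNorm g := by
  obtain ⟨M, hM⟩ := hg
  exact le_ciSup (f := fun x => |g x|) ⟨M, by rintro _ ⟨x, rfl⟩; exact hM x⟩ x

theorem h10_sup_le {g : (ℕ → E) → ℝ} {M : ℝ} (hM : 0 ≤ M) (h : ∀ x, |g x| ≤ M) :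
    supNorm g ≤ M := Real.iSup_le h hM

theorem h10_D_nonneg (α : ℝ) (g : (ℕ → E) → ℝ) : 0 ≤ Dalpha α g := by
  apply Real.sSup_nonneg
  rintro r ⟨x, y, _, rfl⟩
  exact div_nonneg (abs_nonneg _) (Real.rpow_nonneg (h10_dX_nonneg x y) _)

theorem h10_D_le {α M : ℝ} {g : (ℕ → E) → ℝ} (hM : 0 ≤ M) (h : HolderConst α M g) :
    Dalpha α g ≤ M := by
  apply Real.sSup_le _ hM
  rintro r ⟨x, y, _, rfl⟩
  exact div_le_of_le_mul₀ (Real.rpow_nonneg (h10_dX_nonneg x y) _) hM (h x y)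

theorem h10_holder_mono {α C C' : ℝ} {g : (ℕ → E) → ℝ} (h : HolderConst α C g) (hC : C ≤ C') :
    HolderConst α C' g := fun x y => (h x y).trans
  (mul_le_mul_of_nonneg_right hC (Real.rpow_nonneg (h10_dX_nonneg x y) _))

theorem h10_holder_D {α : ℝ} {g : (ℕ → E) → ℝ} (h : ∃ C, HolderConst α C g) :
    HolderConst α (Dalpha α g) g := by
  obtain ⟨C, hC⟩ := h
  intro x y
  have ht := Real.rpow_nonneg (h10_dX_nonneg x y) α
  rcases ht.eq_or_lt with h0 | hpos
  · have := hC x y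
    rw [← h0] at this ⊢
    simpa using this
  · by_cases hxy : x = y
    · subst hxy
      simpa using mul_nonneg (h10_D_nonneg α g) ht
    · rw [← div_le_iff₀ hpos]
      refine le_csSup ?_ ⟨x, y, hxy, rfl⟩
      refine ⟨max C 0, ?_⟩
      rintro r ⟨x, y, _, rfl⟩
      exact div_le_of_le_mul₀ (Real.rpow_nonneg (h10_dX_nonneg x y) _) (le_max_right _ _)
        (h10_holder_mono hC (le_max_left _ _) x y)

/-- Lipschitz with respect to the concave distance `1 - exp (-B d^α)`. -/
def h10Lip (α B c : ℝ) (g : (ℕ → E) → ℝ) : Prop :=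
  ∀ x y, g x ≤ g y + c * (1 - Real.exp (-(B * dX x y ^ α)))

theorem h10_dX_comm (x y : ℕ → E) : dX x y = dX y x := by
  unfold dX; simp only [dist_comm]

theorem h10_lip_abs {α B c : ℝ} {g : (ℕ → E) → ℝ} (h : h10Lip α B c g) (x y : ℕ → E) :
    |g x - g y| ≤ c * (1 - Real.exp (-(B * dX x y ^ α))) := by
  have h1 := h x y
  have h2 := h y x
  rw [h10_dX_comm y x] at h2
  rw [abs_le]; constructor <;> linarith

theorem h10_t0 (α : ℝ) (x y : ℕ → E) : 0 ≤ dX x y ^ α := Real.rpow_nonneg (h10_dX_nonneg x y) _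

theorem h10_t1 {α : ℝ} (hα : 0 < α) (x y : ℕ → E) : dX x y ^ α ≤ 1 :=
  Real.rpow_le_one (h10_dX_nonneg x y) (h10_dX_le_one x y) hα.le

theorem h10_lip_holder {α B c : ℝ} {g : (ℕ → E) → ℝ} (hc : 0 ≤ c) (h : h10Lip α B c g) :
    HolderConst α (c * B) g := by
  intro x y
  refine (h10_lip_abs h x y).trans ?_
  rw [mul_assoc]
  apply mul_le_mul_of_nonneg_left _ hc
  have := Real.add_one_le_exp (-(B * dX x y ^ α))
  linarith

theorem h10_holder_lip {α B D : ℝ} {g : (ℕ → E) → ℝ} (hα : 0 < α) (hB : 0 < B) (hD : 0 ≤ D)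
    (h : HolderConst α D g) : h10Lip α B (D / (1 - Real.exp (-B))) g := by
  intro x y
  have h1 := (abs_le.1 (h x y)).2
  have h2 := h10_exp_lower B _ (h10_t0 α x y) (h10_t1 hα x y)
  have he : Real.exp (-B) < 1 := by rw [Real.exp_lt_one_iff]; linarith
  have hd : 0 < 1 - Real.exp (-B) := by linarith
  have h3 : D * dX x y ^ α ≤
      D / (1 - Real.exp (-B)) * (1 - Real.exp (-(B * dX x y ^ α))) := by
    rw [div_mul_eq_mul_div, le_div_iff₀ hd, mul_assoc]
    exact mul_le_mul_of_nonneg_left h2 hD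
  linarith

theorem h10_h_ratio {α Ch c0 : ℝ} {h : (ℕ → E) → ℝ} (hc0 : 0 < c0) (hch : ∀ x, c0 ≤ h x)
    (hCh : 0 ≤ Ch) (hH : HolderConst α Ch h) (x y : ℕ → E) :
    h y ≤ Real.exp (Ch / c0 * dX x y ^ α) * h x := by
  have h1 := (abs_le.1 (hH x y)).1
  have h2 := Real.add_one_le_exp (Ch / c0 * dX x y ^ α)
  have hx := hch x
  have h3 : (Ch / c0 * dX x y ^ α + 1) * h x ≤ Real.exp (Ch / c0 * dX x y ^ α) * h x :=
    mul_le_mul_of_nonneg_right h2 (by linarith)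
  have h4 : Ch * dX x y ^ α ≤ Ch / c0 * dX x y ^ α * h x := by
    have : Ch * dX x y ^ α = Ch / c0 * dX x y ^ α * c0 := by field_simp
    rw [this]
    exact mul_le_mul_of_nonneg_left hx
      (mul_nonneg (div_nonneg hCh hc0.le) (h10_t0 α x y))
  linarith

variable [MeasurableSpace E] [BorelSpace E]

/-- The normalized weight. -/
def h10G (f h : (ℕ → E) → ℝ) (lam : ℝ) (x : ℕ → E) (a : E) : ℝ :=
  Real.exp (f (cons a x)) * h (cons a x) / (lam * h x)

theorem h10_Q_eq (p : Measure E) (f h : (ℕ → E) → ℝ) (lam : ℝ) (φ : (ℕ → E) → ℝ) (x : ℕ → E) :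
    Qop p f h lam φ x = ∫ a, h10G f h lam x a * φ (cons a x) ∂p := by
  unfold Qop ruelle h10G
  rw [← integral_div]
  congr 1; ext a; ring

theorem h10_G_int (p : Measure E) {f h : (ℕ → E) → ℝ} {lam : ℝ} (hlam : 0 < lam)
    (hpos : ∀ x, 0 < h x) (heig : ∀ x, ruelle p f h x = lam * h x) (x : ℕ → E) :
    ∫ a, h10G f h lam x a ∂p = 1 := by
  unfold h10G
  rw [integral_div]
  have := heig x
  unfold ruelle at this
  rw [this, div_self (mul_pos hlam (hpos x)).ne']

theorem h10_G_ratio {α Cf Ch c0 lam : ℝ} {f h : (ℕ → E) → ℝ} (hα : 0 < α) (hlam : 0 < lam)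
    (hc0 : 0 < c0)
    (hch : ∀ x, c0 ≤ h x) (hCf : 0 ≤ Cf) (hCh : 0 ≤ Ch)
    (hF : HolderConst α Cf f) (hH : HolderConst α Ch h) (x y : ℕ → E) (a : E) :
    Real.exp (-((Cf + 2 * (Ch / c0)) * dX x y ^ α)) * h10G f h lam y a ≤ h10G f h lam x a := by
  set t := dX x y ^ α with ht
  have ht0 : 0 ≤ t := h10_t0 α x y
  have hK : 0 ≤ Ch / c0 := div_nonneg hCh hc0.le
  have hq : dX (cons a x) (cons a y) ^ α ≤ t := by
    rw [h10_cons_rpow]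
    have : (1 / 2 : ℝ) ^ α ≤ 1 := Real.rpow_le_one (by norm_num) (by norm_num) hα.le
    exact mul_le_of_le_one_left ht0 this
  have hpos : ∀ x, 0 < h x := fun x => hc0.trans_le (hch x)
  have e1 : Real.exp (f (cons a y)) ≤ Real.exp (Cf * t) * Real.exp (f (cons a x)) := by
    rw [← Real.exp_add, Real.exp_le_exp]
    have := (abs_le.1 (hF (cons a x) (cons a y))).1
    have := mul_le_mul_of_nonneg_left hq hCf
    linarith
  have e2 : h (cons a y) ≤ Real.exp (Ch / c0 * t) * h (cons a x) := by
    refine (h10_h_ratio hc0 hch hCh hH (cons a x) (cons a y)).trans ?_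
    apply mul_le_mul_of_nonneg_right _ (hpos _).le
    exact Real.exp_le_exp.2 (mul_le_mul_of_nonneg_left hq hK)
  have e3 : h x ≤ Real.exp (Ch / c0 * t) * h y := by
    have := h10_h_ratio hc0 hch hCh hH y x
    rwa [h10_dX_comm y x] at this
  unfold h10G
  have hx := hpos x
  have hy := hpos y
  rw [← mul_div_assoc, div_le_div_iff₀ (mul_pos hlam hy) (mul_pos hlam hx)]
  have key : (Real.exp (f (cons a y)) * h (cons a y)) * h x ≤
      ((Real.exp (Cf * t) * Real.exp (f (cons a x))) * (Real.exp (Ch / c0 * t) * h (cons a x)))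
        * (Real.exp (Ch / c0 * t) * h y) := by
    have p1 := hpos (cons a x)
    have p2 := hpos (cons a y)
    gcongr
  have hE : Real.exp (-((Cf + 2 * (Ch / c0)) * t)) *
      (Real.exp (Cf * t) * Real.exp (Ch / c0 * t) * Real.exp (Ch / c0 * t)) = 1 := by
    rw [← Real.exp_add, ← Real.exp_add, ← Real.exp_add]
    rw [Real.exp_eq_one_iff]; ring
  have k2 := mul_le_mul_of_nonneg_left key (mul_nonneg hlam.le (Real.exp_nonneg
    (-((Cf + 2 * (Ch / c0)) * t))))
  calc _ = lam * Real.exp (-((Cf + 2 * (Ch / c0)) * t)) *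
        (Real.exp (f (cons a y)) * h (cons a y) * h x) := by ring
    _ ≤ _ := k2
    _ = (Real.exp (-((Cf + 2 * (Ch / c0)) * t)) *
      (Real.exp (Cf * t) * Real.exp (Ch / c0 * t) * Real.exp (Ch / c0 * t))) *
      (Real.exp (f (cons a x)) * h (cons a x) * (lam * h y)) := by ring
    _ = _ := by rw [hE, one_mul]

theorem h10_integrable [TopologicalSpace.SeparableSpace E] (p : Measure E) [IsProbabilityMeasure p]
    {g : (ℕ → E) → ℝ} (hg : Continuous g) (hb : Bdd g) (x : ℕ → E) :
    Integrable (fun a => g (cons a x)) p := by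
  obtain ⟨M, hM⟩ := hb
  have := UniformSpace.secondCountable_of_separable E
  exact Integrable.of_bound (hg.comp (h10_cont_cons_left x)).aestronglyMeasurable M
    (Eventually.of_forall fun a => hM _)

theorem h10_bdd_mul {g k : (ℕ → E) → ℝ} (hg : Bdd g) (hk : Bdd k) : Bdd (fun x => g x * k x) := by
  obtain ⟨M, hM⟩ := hg
  obtain ⟨N, hN⟩ := hk
  refine ⟨M * N, fun x => ?_⟩
  rw [abs_mul]
  exact mul_le_mul (hM x) (hN x) (abs_nonneg _) ((abs_nonneg _).trans (hM x))

theorem h10_bdd_exp {f : (ℕ → E) → ℝ} (hf : Bdd f) : Bdd (fun x => Real.exp (f x)) := by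
  obtain ⟨M, hM⟩ := hf
  refine ⟨Real.exp M, fun x => ?_⟩
  rw [abs_of_pos (Real.exp_pos _), Real.exp_le_exp]
  exact (abs_le.1 (hM x)).2

theorem h10_Gφ_integrable [TopologicalSpace.SeparableSpace E] (p : Measure E)
    [IsProbabilityMeasure p] {f h φ : (ℕ → E) → ℝ} {lam : ℝ} (hf : MemCb f) (hh : MemCb h)
    (hφ : MemCb φ) (x y : ℕ → E) :
    Integrable (fun a => h10G f h lam x a * φ (cons a x)) p := by
  have := (h10_integrable p (g := fun z => Real.exp (f z) * h z * φ z)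
    (by have := hf.1; have := hh.1; have := hφ.1; fun_prop)
    (h10_bdd_mul (h10_bdd_mul (h10_bdd_exp hf.2) hh.2) hφ.2) x).div_const (lam * h x)
  refine this.congr (Eventually.of_forall fun a => ?_)
  simp only [h10G]; ring

theorem h10_G_integrable [TopologicalSpace.SeparableSpace E] (p : Measure E)
    [IsProbabilityMeasure p] {f h : (ℕ → E) → ℝ} {lam : ℝ} (hf : MemCb f) (hh : MemCb h)
    (x : ℕ → E) : Integrable (fun a => h10G f h lam x a) p := by
  simpa using h10_Gφ_integrable p (lam := lam) (φ := fun _ => 1) hf hh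
    ⟨continuous_const, 1, by simp⟩ x x

theorem h10_contr [TopologicalSpace.SeparableSpace E] (p : Measure E)
    [IsProbabilityMeasure p] {α Cf Ch c0 lam A B c : ℝ} {f h φ : (ℕ → E) → ℝ} (hα : 0 < α)
    (hlam : 0 < lam) (hc0 : 0 < c0) (hch : ∀ x, c0 ≤ h x) (hCf : 0 ≤ Cf) (hCh : 0 ≤ Ch)
    (hF : HolderConst α Cf f) (hH : HolderConst α Ch h) (hf : MemCb f) (hh : MemCb h)
    (heig : ∀ x, ruelle p f h x = lam * h x)
    (hA : A = Cf + 2 * (Ch / c0)) (hB : 1 < B) (hAB : A + (1 / 2 : ℝ) ^ α * B = B - 1)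
    (hφ : MemCb φ) (hc : 0 ≤ c) (hL : h10Lip α B c φ) :
    h10Lip α B ((1 - Real.exp (-(B - 1))) / (1 - Real.exp (-B)) * c) (Qop p f h lam φ) := by
  intro x y
  set t := dX x y ^ α with ht
  have ht0 : 0 ≤ t := h10_t0 α x y
  have ht1 : t ≤ 1 := h10_t1 hα x y
  set κ := Real.exp (-(A * t)) with hκ
  set ρ := 1 - Real.exp (-(B * ((1 / 2 : ℝ) ^ α * t))) with hρ
  set b := Qop p f h lam φ y with hb
  have hpos : ∀ x, 0 < h x := fun x => hc0.trans_le (hch x)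
  have hG0 : ∀ x a, 0 ≤ h10G f h lam x a := fun x a =>
    div_nonneg (mul_nonneg (Real.exp_nonneg _) (hpos _).le) (mul_pos hlam (hpos x)).le
  have hGi : ∀ x, Integrable (fun a => h10G f h lam x a) p := fun x => h10_G_integrable p hf hh x
  have hGφi : ∀ x, Integrable (fun a => h10G f h lam x a * φ (cons a x)) p :=
    fun x => h10_Gφ_integrable p hf hh hφ x x
  have hG1 : ∀ x, ∫ a, h10G f h lam x a ∂p = 1 := h10_G_int p hlam hpos heig
  have hosc : ∀ z w, φ z ≤ φ w + c := fun z w => by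
    have := hL z w
    have h2 : c * (1 - Real.exp (-(B * dX z w ^ α))) ≤ c :=
      mul_le_of_le_one_right hc (by linarith [Real.exp_pos (-(B * dX z w ^ α))])
    linarith
  have hbc : ∀ z, φ z ≤ b + c := by
    intro z
    have : ∫ a, h10G f h lam y a * (φ z - c) ∂p ≤ ∫ a, h10G f h lam y a * φ (cons a y) ∂p := by
      refine integral_mono ((hGi y).mul_const _) (hGφi y) fun a => ?_
      exact mul_le_mul_of_nonneg_left (by linarith [hosc z (cons a y)]) (hG0 y a)
    rw [integral_mul_const, hG1, ← h10_Q_eq] at this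
    linarith
  have hpt : ∀ a, h10G f h lam x a * φ (cons a x) ≤
      h10G f h lam x a * (b + c) + h10G f h lam y a * (κ * (c * ρ - (b + c)))
        + κ * (h10G f h lam y a * φ (cons a y)) := by
    intro a
    have r := h10_G_ratio hα hlam hc0 hch hCf hCh hF hH x y a
    rw [← hA] at r
    have h1 := mul_le_mul_of_nonneg_left (hbc (cons a x)) (sub_nonneg.2 r)
    have h2 := hL (cons a x) (cons a y)
    rw [h10_cons_rpow] at h2
    have h3 := mul_le_mul_of_nonneg_left h2 (mul_nonneg (Real.exp_nonneg (-(A * t))) (hG0 y a))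
    nlinarith [h1, h3]
  have hint := integral_mono (hGφi x) ((((hGi x).mul_const (b + c)).add
    ((hGi y).mul_const (κ * (c * ρ - (b + c))))).add ((hGφi y).const_mul κ)) hpt
  have hev : ∫ a, (h10G f h lam x a * (b + c) + h10G f h lam y a * (κ * (c * ρ - (b + c)))
        + κ * (h10G f h lam y a * φ (cons a y))) ∂p =
      (b + c) + κ * (c * ρ - (b + c)) + κ * b := by
    have hsum : Integrable (fun a => h10G f h lam x a * (b + c) +
        h10G f h lam y a * (κ * (c * ρ - (b + c)))) p :=
      ((hGi x).mul_const (b + c)).add ((hGi y).mul_const (κ * (c * ρ - (b + c))))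
    rw [integral_add hsum ((hGφi y).const_mul κ),
      integral_add ((hGi x).mul_const (b + c)) ((hGi y).mul_const (κ * (c * ρ - (b + c)))),
      integral_mul_const, integral_mul_const, integral_const_mul, hG1, hG1, ← h10_Q_eq]
    ring
  have hint2 : Qop p f h lam φ x ≤ (b + c) + κ * (c * ρ - (b + c)) + κ * b := by
    rw [h10_Q_eq, ← hev]; exact hint
  have hκρ : κ * (1 - ρ) = Real.exp (-((B - 1) * t)) := by
    rw [hκ, hρ, sub_sub_cancel, ← Real.exp_add, ← hAB]
    congr 1; ring
  have hfin := mul_le_mul_of_nonneg_left (h10_exp_contr B t hB ht0 ht1) hc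
  rw [← hκρ] at hfin
  calc _ ≤ _ := hint2
    _ = b + c * (1 - κ * (1 - ρ)) := by ring
    _ ≤ b + c * ((1 - Real.exp (-(B - 1))) / (1 - Real.exp (-B)) *
        (1 - Real.exp (-(B * t)))) := by linarith
    _ = _ := by ring

theorem h10_Q_bound [TopologicalSpace.SeparableSpace E] (p : Measure E)
    [IsProbabilityMeasure p] {lam M : ℝ} {f h φ : (ℕ → E) → ℝ}
    (hlam : 0 < lam) (hpos : ∀ x, 0 < h x) (hf : MemCb f) (hh : MemCb h)
    (heig : ∀ x, ruelle p f h x = lam * h x) (hM : ∀ x, |φ x| ≤ M) (x : ℕ → E) :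
    |Qop p f h lam φ x| ≤ M := by
  have hG0 : ∀ x a, 0 ≤ h10G f h lam x a := fun x a =>
    div_nonneg (mul_nonneg (Real.exp_nonneg _) (hpos _).le) (mul_pos hlam (hpos x)).le
  rw [h10_Q_eq]
  have := norm_integral_le_of_norm_le (μ := p) (f := fun a => h10G f h lam x a * φ (cons a x))
    ((h10_G_integrable p (lam := lam) hf hh x).mul_const M) (Eventually.of_forall fun a => by
      rw [Real.norm_eq_abs, abs_mul, abs_of_nonneg (hG0 x a)]
      exact mul_le_mul_of_nonneg_left (hM _) (hG0 x a))
  rwa [integral_mul_const, h10_G_int p hlam hpos heig, one_mul] at this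

theorem h10_ruelle_cont [TopologicalSpace.SeparableSpace E] (p : Measure E)
    [IsProbabilityMeasure p] {f φ : (ℕ → E) → ℝ} (hf : MemCb f) (hφ : MemCb φ) :
    Continuous (ruelle p f φ) := by
  have := UniformSpace.secondCountable_of_separable E
  obtain ⟨M, hM⟩ := h10_bdd_mul (h10_bdd_exp hf.2) hφ.2
  have hc : Continuous fun z => Real.exp (f z) * φ z := (Real.continuous_exp.comp hf.1).mul hφ.1
  refine continuous_of_dominated (F := fun x a => Real.exp (f (cons a x)) * φ (cons a x))
    (bound := fun _ => M)
    (fun x => (hc.comp (h10_cont_cons_left x)).aestronglyMeasurable)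
    (fun x => Eventually.of_forall fun a => hM _) (integrable_const _)
    (Eventually.of_forall fun a => hc.comp (h10_cont_cons_right a))

end Helpers10

/-- Quasi-compactness of the normalized operator: `Q` and `Π` are
bounded operators on `Hol(α)`, `Π ∘ Q = Q ∘ Π = Π`, both fix constant functions, and
`‖(Q − Π)ⁿ(φ)‖_α ≤ C sⁿ ‖φ‖_α`. -/
theorem statement10 {E : Type*} [MetricSpace E] [CompleteSpace E]
    [TopologicalSpace.SeparableSpace E] [MeasurableSpace E] [BorelSpace E] [Nonempty E]
    (p : Measure E) [IsProbabilityMeasure p]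
    (α : ℝ) (hα0 : 0 < α) (hα1 : α < 1)
    (f : (ℕ → E) → ℝ) (hf : MemHol α f)
    (ν : Measure (ℕ → E)) (hν : IsProbabilityMeasure ν) (lam : ℝ) (hlam : 0 < lam)
    (hconf : ∀ φ : (ℕ → E) → ℝ, MemCb φ →
      (∫ x, ruelle p f φ x ∂ν) = lam * ∫ x, φ x ∂ν)
    (h : (ℕ → E) → ℝ) (hh : MemHol α h)
    (hbd : ∃ c C : ℝ, 0 < c ∧ (∀ x, c ≤ h x) ∧ ∀ x, h x ≤ C)
    (heig : ∀ x, ruelle p f h x = lam * h x)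
    (hnorm : (∫ x, h x ∂ν) = 1) :
    (∃ K : ℝ, 0 < K ∧ ∀ φ : (ℕ → E) → ℝ, MemHol α φ →
      MemHol α (Qop p f h lam φ) ∧ MemHol α (Piop ν h φ) ∧
      alphaNorm α (Qop p f h lam φ) ≤ K * alphaNorm α φ ∧
      alphaNorm α (Piop ν h φ) ≤ K * alphaNorm α φ) ∧
    (∀ φ : (ℕ → E) → ℝ, MemHol α φ →
      Piop ν h (Qop p f h lam φ) = Piop ν h φ ∧
      Qop p f h lam (Piop ν h φ) = Piop ν h φ) ∧
    (∀ c : ℝ, Qop p f h lam (fun _ => c) = (fun _ => c) ∧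
      Piop ν h (fun _ => c) = (fun _ => c)) ∧
    ∃ C s : ℝ, 0 < C ∧ 0 < s ∧ s < 1 ∧
      ∀ φ : (ℕ → E) → ℝ, MemHol α φ → ∀ n : ℕ,
        alphaNorm α ((QminusPi p f h lam ν)^[n] φ) ≤ C * s ^ n * alphaNorm α φ := by
  obtain ⟨c0, Cm, hc0, hch, -⟩ := hbd
  have := UniformSpace.secondCountable_of_separable E
  have hpos : ∀ x, 0 < h x := fun x => hc0.trans_le (hch x)
  have hfb : MemCb f := ⟨hf.1, hf.2.1⟩
  have hhb : MemCb h := ⟨hh.1, hh.2.1⟩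
  have hF := h10_holder_D hf.2.2
  have hH := h10_holder_D hh.2.2
  have hCf := h10_D_nonneg α f
  have hCh := h10_D_nonneg α h
  obtain ⟨A, hA⟩ : ∃ A, A = Dalpha α f + 2 * (Dalpha α h / c0) := ⟨_, rfl⟩
  have hA0 : 0 ≤ A := by rw [hA]; positivity
  have hr0 : 0 < (1 / 2 : ℝ) ^ α := by positivity
  have hr1 : (1 / 2 : ℝ) ^ α < 1 := Real.rpow_lt_one (by norm_num) (by norm_num) hα0
  obtain ⟨B, hBdef⟩ : ∃ B, B = (A + 1) / (1 - (1 / 2 : ℝ) ^ α) := ⟨_, rfl⟩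
  have h1r : 0 < 1 - (1 / 2 : ℝ) ^ α := by linarith
  have hB1 : 1 < B := by rw [hBdef, lt_div_iff₀ h1r]; linarith
  have hB0 : 0 < B := by linarith
  have hAB : A + (1 / 2 : ℝ) ^ α * B = B - 1 := by
    have : B * (1 - (1 / 2 : ℝ) ^ α) = A + 1 := by rw [hBdef]; field_simp
    linarith
  have he : Real.exp (-B) < 1 := by rw [Real.exp_lt_one_iff]; linarith
  obtain ⟨d, hd⟩ : ∃ d, d = 1 - Real.exp (-B) := ⟨_, rfl⟩
  have hd0 : 0 < d := by linarith
  obtain ⟨s, hs⟩ : ∃ s, s = (1 - Real.exp (-(B - 1))) / (1 - Real.exp (-B)) := ⟨_, rfl⟩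
  have hs0 : 0 < s := by
    rw [hs]
    apply div_pos _ (by linarith)
    have : Real.exp (-(B - 1)) < 1 := by rw [Real.exp_lt_one_iff]; linarith
    linarith
  have hs1 : s < 1 := by
    rw [hs, div_lt_one (by linarith)]
    have : Real.exp (-B) < Real.exp (-(B - 1)) := Real.exp_lt_exp.2 (by linarith)
    linarith
  have hcb : ∀ φ : (ℕ → E) → ℝ, MemHol α φ → MemCb φ := fun φ hφ => ⟨hφ.1, hφ.2.1⟩
  -- one step contraction
  have hcontr : ∀ (φ : (ℕ → E) → ℝ) (c : ℝ), MemHol α φ → 0 ≤ c → h10Lip α B c φ →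
      h10Lip α B (s * c) (Qop p f h lam φ) := by
    intro φ c hφ hc hL
    rw [hs]
    exact h10_contr p hα0 hlam hc0 hch hCf hCh hF hH hfb hhb heig hA hB1 hAB (hcb φ hφ) hc hL
  have hlip : ∀ φ : (ℕ → E) → ℝ, MemHol α φ → h10Lip α B (Dalpha α φ / d) φ := by
    intro φ hφ
    rw [hd]
    exact h10_holder_lip hα0 hB0 (h10_D_nonneg α φ) (h10_holder_D hφ.2.2)
  have hDd : ∀ φ : (ℕ → E) → ℝ, 0 ≤ Dalpha α φ / d :=
    fun φ => div_nonneg (h10_D_nonneg α φ) hd0.le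
  have hQhol : ∀ φ : (ℕ → E) → ℝ, MemHol α φ →
      HolderConst α (Dalpha α φ / d * B) (Qop p f h lam φ) := by
    intro φ hφ
    have h1 := h10_lip_holder (mul_nonneg hs0.le (hDd φ)) (hcontr φ _ hφ (hDd φ) (hlip φ hφ))
    refine h10_holder_mono h1 ?_
    apply mul_le_mul_of_nonneg_right _ hB0.le
    exact mul_le_of_le_one_left (hDd φ) hs1.le
  have hQb : ∀ φ : (ℕ → E) → ℝ, MemHol α φ → ∀ x, |Qop p f h lam φ x| ≤ supNorm φ :=
    fun φ hφ => h10_Q_bound p hlam hpos hfb hhb heig (h10_le_sup hφ.2.1)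
  have hhφ : ∀ φ : (ℕ → E) → ℝ, MemHol α φ → MemCb (fun y => h y * φ y) :=
    fun φ hφ => ⟨hh.1.mul hφ.1, h10_bdd_mul hh.2.1 hφ.2.1⟩
  have hQmem : ∀ φ : (ℕ → E) → ℝ, MemHol α φ → MemHol α (Qop p f h lam φ) := by
    intro φ hφ
    refine ⟨?_, ⟨_, hQb φ hφ⟩, _, hQhol φ hφ⟩
    exact (h10_ruelle_cont p hfb (hhφ φ hφ)).div (continuous_const.mul hh.1)
      fun x => (mul_pos hlam (hpos x)).ne'
  have hconst : ∀ c : ℝ, MemHol α (fun _ : ℕ → E => c) := fun c =>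
    ⟨continuous_const, ⟨|c|, fun _ => le_rfl⟩, 0, fun x y => by simp⟩
  have hPmem : ∀ φ : (ℕ → E) → ℝ, MemHol α φ → MemHol α (Piop ν h φ) := fun φ _ => hconst _
  have hνint : ∀ g : (ℕ → E) → ℝ, MemCb g → Integrable g ν := by
    rintro g ⟨hg, M, hM⟩
    exact Integrable.of_bound hg.aestronglyMeasurable M (Eventually.of_forall hM)
  have hPb : ∀ (φ : (ℕ → E) → ℝ) (M : ℝ), (∀ x, |φ x| ≤ M) →
      |∫ y, φ y * h y ∂ν| ≤ M := by
    intro φ M hM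
    have := norm_integral_le_of_norm_le (μ := ν) (f := fun y => φ y * h y)
      ((hνint h hhb).const_mul M) (Eventually.of_forall fun y => by
        rw [Real.norm_eq_abs, abs_mul, abs_of_pos (hpos y)]
        exact mul_le_mul_of_nonneg_right (hM y) (hpos y).le)
    rwa [integral_const_mul, hnorm, mul_one] at this
  have hPQ : ∀ φ : (ℕ → E) → ℝ, MemHol α φ →
      ∫ y, Qop p f h lam φ y * h y ∂ν = ∫ y, φ y * h y ∂ν := by
    intro φ hφ
    have h1 : ∀ y, Qop p f h lam φ y * h y = ruelle p f (fun y => h y * φ y) y / lam := by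
      intro y
      unfold Qop
      have := (hpos y).ne'
      field_simp
    simp only [h1]
    rw [integral_div, hconf _ (hhφ φ hφ), mul_div_cancel_left₀ _ hlam.ne']
    simp only [mul_comm]
  have hQc : ∀ c : ℝ, Qop p f h lam (fun _ => c) = (fun _ => c) := by
    intro c
    ext x
    rw [h10_Q_eq, integral_mul_const, h10_G_int p hlam hpos heig, one_mul]
  have hPc : ∀ c : ℝ, Piop ν h (fun _ => c) = (fun _ => c) := by
    intro c
    ext x
    unfold Piop
    rw [integral_const_mul, hnorm, mul_one]
  have hBd : 0 < B / d := div_pos hB0 hd0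
  refine ⟨⟨1 + B / d, by linarith, fun φ hφ => ⟨hQmem φ hφ, hPmem φ hφ, ?_, ?_⟩⟩,
    fun φ hφ => ⟨?_, hQc _⟩, fun c => ⟨hQc c, hPc c⟩, ?_⟩
  · have h1 : supNorm (Qop p f h lam φ) ≤ supNorm φ := h10_sup_le (h10_sup_nonneg φ) (hQb φ hφ)
    have h2 := h10_D_le (mul_nonneg (hDd φ) hB0.le) (hQhol φ hφ)
    have h3 : Dalpha α φ / d * B = B / d * Dalpha α φ := by ring
    have h4 := mul_nonneg hBd.le (h10_sup_nonneg φ)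
    have h5 := h10_D_nonneg α φ
    unfold alphaNorm
    linarith
  · have h1 : supNorm (Piop ν h φ) ≤ supNorm φ :=
      h10_sup_le (h10_sup_nonneg φ) fun x => hPb φ _ (h10_le_sup hφ.2.1)
    have h2 : Dalpha α (Piop ν h φ) ≤ 0 := h10_D_le le_rfl fun x y => by simp [Piop]
    have h4 := mul_nonneg hBd.le (h10_sup_nonneg φ)
    have h5 := h10_D_nonneg α φ
    have h6 := mul_nonneg hBd.le h5
    unfold alphaNorm
    linarith
  · ext x
    exact hPQ φ hφ
  · refine ⟨1 + (1 + B) / d, s, by positivity, hs0, hs1, fun φ hφ n => ?_⟩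
    have hmem : ∀ ψ : (ℕ → E) → ℝ, MemHol α ψ → MemHol α (QminusPi p f h lam ν ψ) := by
      intro ψ hψ
      have hq := hQmem ψ hψ
      obtain ⟨M, hM⟩ := hq.2.1
      obtain ⟨C, hC⟩ := hq.2.2
      refine ⟨hq.1.sub continuous_const, ⟨M + |∫ y, ψ y * h y ∂ν|, fun x => ?_⟩, C, fun x y => ?_⟩
      · exact (abs_sub _ _).trans (add_le_add (hM x) le_rfl)
      · simp only [QminusPi, Piop, sub_sub_sub_cancel_right]
        exact hC x y
    have hit : ∀ n, MemHol α ((QminusPi p f h lam ν)^[n] φ) ∧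
        h10Lip α B (s ^ n * (Dalpha α φ / d)) ((QminusPi p f h lam ν)^[n] φ) := by
      intro n
      induction n with
      | zero => simpa using ⟨hφ, hlip φ hφ⟩
      | succ k ih =>
        rw [Function.iterate_succ_apply']
        refine ⟨hmem _ ih.1, fun x y => ?_⟩
        have h1 := hcontr _ _ ih.1 (mul_nonneg (pow_nonneg hs0.le k) (hDd φ)) ih.2 x y
        simp only [QminusPi, Piop]
        rw [pow_succ', mul_assoc s]
        linarith
    have hS := h10_sup_nonneg φ
    have hD := h10_D_nonneg α φ
    cases n with
    | zero =>
      simp only [Function.iterate_zero, id_eq, pow_zero, mul_one]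
      have : 0 ≤ (1 + B) / d * alphaNorm α φ :=
        mul_nonneg (by positivity) (add_nonneg hS hD)
      linarith
    | succ k =>
      obtain ⟨hm, hl⟩ := hit (k + 1)
      have hzero : ∫ y, (QminusPi p f h lam ν)^[k + 1] φ y * h y ∂ν = 0 := by
        rw [Function.iterate_succ_apply']
        have hk := (hit k).1
        generalize (QminusPi p f h lam ν)^[k] φ = ψ at hk ⊢
        simp only [QminusPi, Piop, sub_mul]
        have hq := hQmem ψ hk
        rw [integral_sub (hνint (fun y => Qop p f h lam ψ y * h y) ⟨hq.1.mul hh.1, h10_bdd_mul hq.2.1 hh.2.1⟩)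
          ((hνint h hhb).const_mul _), integral_const_mul, hnorm, hPQ ψ hk]
        ring
      generalize (QminusPi p f h lam ν)^[k + 1] φ = ψ at hm hl hzero ⊢
      have hcc : 0 ≤ s ^ (k + 1) * (Dalpha α φ / d) :=
        mul_nonneg (pow_nonneg hs0.le _) (hDd φ)
      generalize hcdef : s ^ (k + 1) * (Dalpha α φ / d) = c at hl hcc
      have h2 := h10_D_le (mul_nonneg hcc hB0.le) (h10_lip_holder hcc hl)
      have h1 : supNorm ψ ≤ c := by
        refine h10_sup_le hcc fun x => ?_
        have h3 := hPb (fun y => ψ x - ψ y) c fun y =>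
          (h10_lip_abs hl x y).trans (mul_le_of_le_one_right hcc
            (by linarith [Real.exp_pos (-(B * dX x y ^ α))]))
        simp only [sub_mul] at h3
        rwa [integral_sub ((hνint h hhb).const_mul _)
          (hνint (fun y => ψ y * h y) ⟨hm.1.mul hh.1, h10_bdd_mul hm.2.1 hh.2.1⟩), integral_const_mul, hnorm, hzero,
          mul_one, sub_zero] at h3
      have hsp : 0 ≤ s ^ (k + 1) := pow_nonneg hs0.le _
      have hq : 0 ≤ (1 + B) / d := by positivity
      calc alphaNorm α ψ ≤ c + c * B := add_le_add h1 h2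
        _ = (1 + B) / d * s ^ (k + 1) * Dalpha α φ := by rw [← hcdef]; ring
        _ ≤ (1 + (1 + B) / d) * s ^ (k + 1) * alphaNorm α φ := by
          unfold alphaNorm
          apply mul_le_mul _ (by linarith) hD (by positivity)
          exact mul_le_mul_of_nonneg_right (by linarith) hsp

end
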